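/- In the endomorphism operad of a K-module L, the square of the coboundary operator is the right adjoint action of the formal associator: for every homogeneous f one has ∂(∂f) = [f, μ²], where μ² := μ • μ. Consequently, if μ² = 0 then ∂² = 0. -/

import Mathlib

/-!
Everything follows from the graded pre-Lie property of the total composition. In
`(F • G) • H` the terms `(F ∘ᵢ G) ∘ⱼ H` that insert `H` inside `G` add up to `F • (G • H)`
(`pcomp_nested`). In the remaining terms `G` and `H` occupy two different slots of `F`, and by
`pcomp_parallel` they add up to `S(G, H) + (-1)^{|G||H|} S(H, G)`, where `S = parallelSum`
collects the terms having `H` to the left of `G`; this is `tcomp_assoc`.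

Since `|μ| = 1`, the correction vanishes for `G = H = μ`, so `(f • μ) • μ = f • μ²`. For `F = μ`,
the corrections of `(μ • f) • μ` and `(μ • μ) • f` agree up to the sign `(-1)^{|f|}`. Expanding
`∂(∂f)` and substituting, the terms `μ • (μ • f)` cancel and `f • μ² - μ² • f` remains.
-/

variable {K : Type*} [CommRing K] {L : Type*} [AddCommGroup L] [Module K L]

/-- `(-1)^z` for an integer exponent `z`. -/
def sgn (z : ℤ) : ℤ := (-1) ^ z.natAbs

/-- The underlying function (on `ℕ`-indexed families of elements of `L`) of an
`n`-multilinear map `f ∈ Eⁿ`; equality of such functions is equivalent to equality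
of the multilinear maps. -/
def toFn {n : ℕ} (f : MultilinearMap K (fun _ : Fin n => L) L) : (ℕ → L) → L :=
  fun x => f fun a => x a.val

/-- Partial composition `F ∘ᵢ G`, where `n` is the arity (degree) of `G`:
`(f ∘ᵢ g)(x_0, …) = (-1)^{i(n-1)} f(x_0, …, x_{i-1}, g(x_i, …, x_{i+n-1}), x_{i+n}, …)`. -/
def pcomp (i n : ℕ) (F G : (ℕ → L) → L) : (ℕ → L) → L :=
  fun x => sgn ((i : ℤ) * ((n : ℤ) - 1)) •
    F fun k => if k < i then x k else if k = i then G (fun j => x (i + j)) else x (k + n - 1)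

/-- Total composition `F • G := Σ_{i=0}^{m-1} F ∘ᵢ G`, where `m, n` are the arities of `F, G`. -/
def tcomp (m n : ℕ) (F G : (ℕ → L) → L) : (ℕ → L) → L :=
  ∑ i ∈ Finset.range m, pcomp i n F G

/-- Gerstenhaber bracket `[F, G] := F • G - (-1)^{|F||G|} G • F` for arities `m, n` of `F, G`. -/
def gbr (m n : ℕ) (F G : (ℕ → L) → L) : (ℕ → L) → L :=
  tcomp m n F G - sgn (((m : ℤ) - 1) * ((n : ℤ) - 1)) • tcomp n m G F

lemma sgn_eq_ite (z : ℤ) : sgn z = if Even z then 1 else -1 := by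
  unfold sgn
  split_ifs with h
  · exact Even.neg_one_pow (Int.natAbs_even.mpr h)
  · exact Odd.neg_one_pow (Int.natAbs_odd.mpr (Int.not_even_iff_odd.mp h))

lemma sgn_add (a b : ℤ) : sgn (a + b) = sgn a * sgn b := by
  simp only [sgn_eq_ite, Int.even_add]
  by_cases ha : Even a <;> by_cases hb : Even b <;> simp [ha, hb]

lemma sgn_eq_of_even_sub {a b : ℤ} (h : Even (a - b)) : sgn a = sgn b := by
  rw [Int.even_sub] at h
  simp only [sgn_eq_ite, h]

lemma sgn_mul_self (a : ℤ) : sgn a * sgn a = 1 := by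
  rw [sgn_eq_ite]
  split_ifs <;> norm_num

/-- A multilinear map is additive in each of its slots, in the form in which slots occur in
`pcomp`. -/
lemma toFn_slot {m : ℕ} (f : MultilinearMap K (fun _ : Fin m => L) L) {i : ℕ} (hi : i < m)
    (x y : ℕ → L) : ∃ φ : L →+ L, ∀ a,
      toFn f (fun k => if k < i then x k else if k = i then a else y k) = φ a := by
  refine ⟨(f.toLinearMap (fun k => if k.val < i then x k else y k) ⟨i, hi⟩).toAddMonoidHom,
    fun a => ?_⟩
  simp only [toFn, LinearMap.toAddMonoidHom_coe, MultilinearMap.toLinearMap_apply]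
  congr 1
  funext k
  by_cases h : k = ⟨i, hi⟩
  · subst h
    simp
  · have h' : k.val ≠ i := fun e => h (Fin.ext e)
    simp [Function.update_of_ne h, h']

lemma toFn_congr {m : ℕ} (f : MultilinearMap K (fun _ : Fin m => L) L) {x y : ℕ → L}
    (h : ∀ k < m, x k = y k) : toFn f x = toFn f y := by
  unfold toFn
  congr 1
  funext k
  exact h k k.isLt

lemma pcomp_sum_right {m : ℕ} (f : MultilinearMap K (fun _ : Fin m => L) L) {i : ℕ} (hi : i < m)
    (n : ℕ) {ι : Type*} (s : Finset ι) (G : ι → (ℕ → L) → L) :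
    pcomp i n (toFn f) (∑ a ∈ s, G a) = ∑ a ∈ s, pcomp i n (toFn f) (G a) := by
  funext x
  obtain ⟨φ, hφ⟩ := toFn_slot f hi x (fun k => x (k + n - 1))
  simp only [Finset.sum_apply, pcomp, hφ, map_sum, Finset.smul_sum]

lemma pcomp_sub_right {m : ℕ} (f : MultilinearMap K (fun _ : Fin m => L) L) {i : ℕ} (hi : i < m)
    (n : ℕ) (G H : (ℕ → L) → L) :
    pcomp i n (toFn f) (G - H) = pcomp i n (toFn f) G - pcomp i n (toFn f) H := by
  funext x
  obtain ⟨φ, hφ⟩ := toFn_slot f hi x (fun k => x (k + n - 1))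
  simp only [Pi.sub_apply, pcomp, hφ, map_sub, smul_sub]

lemma pcomp_zsmul_right {m : ℕ} (f : MultilinearMap K (fun _ : Fin m => L) L) {i : ℕ} (hi : i < m)
    (n : ℕ) (c : ℤ) (G : (ℕ → L) → L) :
    pcomp i n (toFn f) (c • G) = c • pcomp i n (toFn f) G := by
  funext x
  obtain ⟨φ, hφ⟩ := toFn_slot f hi x (fun k => x (k + n - 1))
  simp only [Pi.smul_apply, pcomp, hφ, map_zsmul]
  rw [smul_comm]

lemma pcomp_sum_left (i n : ℕ) {ι : Type*} (s : Finset ι) (F : ι → (ℕ → L) → L)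
    (G : (ℕ → L) → L) : pcomp i n (∑ a ∈ s, F a) G = ∑ a ∈ s, pcomp i n (F a) G := by
  funext x
  simp only [Finset.sum_apply, pcomp, Finset.smul_sum]

lemma tcomp_sub_left (m n : ℕ) (F F' G : (ℕ → L) → L) :
    tcomp m n (F - F') G = tcomp m n F G - tcomp m n F' G := by
  funext x
  simp [tcomp, pcomp, smul_sub]

lemma tcomp_zsmul_left (m n : ℕ) (c : ℤ) (F G : (ℕ → L) → L) :
    tcomp m n (c • F) G = c • tcomp m n F G := by
  funext x
  simp only [tcomp, pcomp, Finset.sum_apply, Pi.smul_apply, Finset.smul_sum]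
  exact Finset.sum_congr rfl fun i _ => smul_comm _ _ _

lemma tcomp_sub_right {m : ℕ} (f : MultilinearMap K (fun _ : Fin m => L) L) (n : ℕ)
    (G H : (ℕ → L) → L) :
    tcomp m n (toFn f) (G - H) = tcomp m n (toFn f) G - tcomp m n (toFn f) H := by
  unfold tcomp
  rw [← Finset.sum_sub_distrib]
  exact Finset.sum_congr rfl fun i hi => pcomp_sub_right f (Finset.mem_range.mp hi) n G H

lemma tcomp_zsmul_right {m : ℕ} (f : MultilinearMap K (fun _ : Fin m => L) L) (n : ℕ) (c : ℤ)
    (G : (ℕ → L) → L) :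
    tcomp m n (toFn f) (c • G) = c • tcomp m n (toFn f) G := by
  unfold tcomp
  rw [Finset.smul_sum]
  exact Finset.sum_congr rfl fun i hi => pcomp_zsmul_right f (Finset.mem_range.mp hi) n c G

/-- Sequential axiom of the operad: inserting `H` in a slot of `F ∘ᵢ G` that belongs to `G`. -/
lemma pcomp_nested {m : ℕ} (f : MultilinearMap K (fun _ : Fin m => L) L) {i j p : ℕ} (hi : i < m)
    (hj : j < p) (q : ℕ) (G H : (ℕ → L) → L) :
    pcomp (i + j) q (pcomp i p (toFn f) G) H =
      pcomp i (p + q - 1) (toFn f) (pcomp j q G H) := by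
  funext x
  obtain ⟨φ, hφ⟩ := toFn_slot f hi x (fun k => x (k + (p + q - 1) - 1))
  simp only [pcomp, hφ, map_zsmul, smul_smul]
  rw [← hφ, ← sgn_add, ← sgn_add]
  congr 1
  · apply sgn_eq_of_even_sub
    rw [Nat.cast_sub (by omega)]
    push_cast
    exact ⟨0, by ring⟩
  · congr 1
    funext k
    rcases lt_trichotomy k i with h | h | h
    · simp [h, show k < i + j by omega]
    · subst h
      simp only [lt_irrefl, if_false, if_true]
      congr 1
      funext l
      rcases lt_trichotomy l j with h | h | h
      · simp [h]
      · subst h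
        simp [add_assoc]
      · rw [if_neg (by omega), if_neg (by omega), if_neg (by omega), if_neg (by omega)]
        congr 1
        omega
    · rw [if_neg (by omega), if_neg (by omega), if_neg (by omega), if_neg (by omega),
        if_neg (by omega), if_neg (by omega)]
      congr 1
      omega

/-- Parallel axiom of the operad: insertions of `G` and `h` in different slots of `F` commute up to
the sign `(-1)^{|G||h|}`. Slot `i` of `F`, lying to the right of slot `j`, becomes slot
`i + q - 1` of `F ∘ⱼ h`; the subtraction does not truncate because `j < i`. -/
lemma pcomp_parallel {q : ℕ} (h : MultilinearMap K (fun _ : Fin q => L) L) {i j : ℕ} (hji : j < i)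
    (p : ℕ) (F G : (ℕ → L) → L) :
    pcomp (i + q - 1) p (pcomp j q F (toFn h)) G =
      sgn (((p : ℤ) - 1) * ((q : ℤ) - 1)) • pcomp j q (pcomp i p F G) (toFn h) := by
  funext x
  simp only [pcomp, Pi.smul_apply, smul_smul]
  rw [← sgn_add, ← sgn_add, ← sgn_add]
  congr 1
  · apply sgn_eq_of_even_sub
    rw [Nat.cast_sub (by omega)]
    push_cast
    exact ⟨0, by ring⟩
  · congr 1
    funext k
    rcases lt_trichotomy k j with h1 | h1 | h1
    · simp [h1, show k < i + q - 1 by omega, show k < i by omega]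
    · subst h1
      simp only [lt_irrefl, if_false, if_true, hji]
      apply toFn_congr
      intro l hl
      rw [if_pos (by omega)]
    · rw [if_neg (by omega), if_neg (by omega)]
      rcases lt_trichotomy k i with h2 | h2 | h2
      · rw [if_pos (by omega), if_pos h2, if_neg (by omega), if_neg (by omega)]
      · subst h2
        rw [if_neg (by omega), if_pos (by omega), if_neg (by omega), if_pos rfl]
        congr 1
        funext l
        rw [if_neg (by omega), if_neg (by omega)]
        congr 1
        omega
      · rw [if_neg (by omega), if_neg (by omega), if_neg (by omega), if_neg (by omega),
          if_neg (by omega), if_neg (by omega)]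
        congr 1
        omega

/-- The sum of all `(F ∘ᵢ G) ∘ⱼ H` with `j < i < m`: simultaneous insertions in `F`, of arity `m`,
of `G` (arity `p`) and of `H` (arity `q`), the latter further to the left. -/
def parallelSum (m p q : ℕ) (F G H : (ℕ → L) → L) : (ℕ → L) → L :=
  ∑ i ∈ Finset.range m, ∑ j ∈ Finset.range i, pcomp j q (pcomp i p F G) H

/-- The associator of the total composition. Exchanging the roles of `g` and `H` multiplies the
correction term by `(-1)^{|g||H|}`, which is the graded pre-Lie identity. -/
lemma tcomp_assoc {m p : ℕ} (f : MultilinearMap K (fun _ : Fin m => L) L)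
    (g : MultilinearMap K (fun _ : Fin p => L) L) (q : ℕ) (H : (ℕ → L) → L) :
    tcomp (m + p - 1) q (tcomp m p (toFn f) (toFn g)) H =
      tcomp m (p + q - 1) (toFn f) (tcomp p q (toFn g) H) +
        (parallelSum m p q (toFn f) (toFn g) H +
          sgn (((p : ℤ) - 1) * ((q : ℤ) - 1)) • parallelSum m q p (toFn f) H (toFn g)) := by
  -- For fixed `i`, the slots of `f ∘ᵢ g` are: `i` to the left of `g`, `p` in `g`, the rest to
  -- the right of `g`.
  have split : ∀ i ∈ Finset.range m,
      ∑ j ∈ Finset.range (m + p - 1), pcomp j q (pcomp i p (toFn f) (toFn g)) H =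
        pcomp i (p + q - 1) (toFn f) (tcomp p q (toFn g) H) +
          (∑ j ∈ Finset.range i, pcomp j q (pcomp i p (toFn f) (toFn g)) H +
            sgn (((p : ℤ) - 1) * ((q : ℤ) - 1)) •
              ∑ j ∈ Finset.Ico (i + 1) m, pcomp i p (pcomp j q (toFn f) H) (toFn g)) := by
    intro i hi
    rw [Finset.mem_range] at hi
    rw [show m + p - 1 = i + (p + (m - (i + 1))) by omega, Finset.sum_range_add,
      Finset.sum_range_add]
    have inside : ∑ j ∈ Finset.range p, pcomp (i + j) q (pcomp i p (toFn f) (toFn g)) H =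
        pcomp i (p + q - 1) (toFn f) (tcomp p q (toFn g) H) := by
      rw [tcomp, pcomp_sum_right f hi]
      exact Finset.sum_congr rfl fun j hj => pcomp_nested f hi (Finset.mem_range.mp hj) q _ H
    have right : ∑ j ∈ Finset.range (m - (i + 1)),
        pcomp (i + (p + j)) q (pcomp i p (toFn f) (toFn g)) H =
          sgn (((p : ℤ) - 1) * ((q : ℤ) - 1)) •
            ∑ j ∈ Finset.Ico (i + 1) m, pcomp i p (pcomp j q (toFn f) H) (toFn g) := by
      rw [Finset.sum_Ico_eq_sum_range, Finset.smul_sum]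
      refine Finset.sum_congr rfl fun j _ => ?_
      rw [mul_comm, ← pcomp_parallel g (by omega : i < i + 1 + j)]
      congr 1
      omega
    rw [inside, right]
    abel
  have swap : ∑ i ∈ Finset.range m, ∑ j ∈ Finset.Ico (i + 1) m,
      pcomp i p (pcomp j q (toFn f) H) (toFn g) = parallelSum m q p (toFn f) H (toFn g) := by
    unfold parallelSum
    refine Finset.sum_comm' fun i j => ?_
    simp only [Finset.mem_range, Finset.mem_Ico]
    omega
  rw [← swap, parallelSum, Finset.smul_sum, ← Finset.sum_add_distrib, tcomp, tcomp,
    tcomp.eq_1 m (p + q - 1), ← Finset.sum_add_distrib, ← Finset.sum_congr rfl split, Finset.sum_comm]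
  simp only [pcomp_sum_left]

/-- The formula `∂(∂f) = [f, μ²]`. -/
lemma gbr_gbr (μ : MultilinearMap K (fun _ : Fin 2 => L) L) (m : ℕ)
    (f : MultilinearMap K (fun _ : Fin m => L) L) :
    gbr (m + 1) 2 (gbr m 2 (toFn f) (toFn μ)) (toFn μ) =
      gbr m 3 (toFn f) (tcomp 2 2 (toFn μ) (toFn μ)) := by
  have h1 := tcomp_assoc f μ 2 (toFn μ)
  have h2 := tcomp_assoc μ f 2 (toFn μ)
  have h3 := tcomp_assoc μ μ m (toFn f)
  rw [show m + 2 - 1 = m + 1 by omega] at h1 h2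
  rw [show 2 + m - 1 = m + 1 by omega] at h2 h3
  norm_num at h1 h2 h3
  rw [show sgn 1 = -1 from rfl] at h1
  simp only [neg_smul, one_smul, add_neg_cancel, add_zero] at h1
  have e1 : sgn (m : ℤ) = -sgn ((m : ℤ) - 1) := by
    have := sgn_add ((m : ℤ) - 1) 1
    rw [sub_add_cancel, show sgn 1 = -1 from rfl] at this
    rw [this]; ring
  have e2 : sgn (((m : ℤ) - 1) * 2) = 1 := by
    rw [mul_two, sgn_add, sgn_mul_self]
  have e3 := sgn_mul_self ((m : ℤ) - 1)
  unfold gbr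
  norm_num
  rw [e2, e1, tcomp_sub_left, tcomp_zsmul_left, tcomp_sub_right, tcomp_zsmul_right, h1, h2, h3]
  simp only [smul_add, smul_sub, smul_smul, neg_smul, neg_mul, e3, one_smul, one_mul]
  abel

/-- In the endomorphism operad (over a ring in which 2 is invertible), the square of the
coboundary operator `∂f := [f, μ]` is the right adjoint action of the formal associator
`μ² := μ • μ`: `∂(∂f) = [f, μ²]`. Consequently, if `μ² = 0` then `∂² = 0`. -/
theorem endop_coboundary_sq [Invertible (2 : K)] (μ : MultilinearMap K (fun _ : Fin 2 => L) L) :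
    (∀ (m : ℕ) (f : MultilinearMap K (fun _ : Fin m => L) L),
        gbr (m + 1) 2 (gbr m 2 (toFn f) (toFn μ)) (toFn μ) =
          gbr m 3 (toFn f) (tcomp 2 2 (toFn μ) (toFn μ))) ∧
      (tcomp 2 2 (toFn μ) (toFn μ) = 0 →
        ∀ (m : ℕ) (f : MultilinearMap K (fun _ : Fin m => L) L),
          gbr (m + 1) 2 (gbr m 2 (toFn f) (toFn μ)) (toFn μ) = 0) := by
  refine ⟨fun m f => gbr_gbr μ m f, fun h m f => ?_⟩
  have right_zero : tcomp m 3 (toFn f) 0 = 0 := by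
    simpa using tcomp_zsmul_right f 3 0 0
  have left_zero : tcomp 3 m 0 (toFn f) = 0 := by
    simpa using tcomp_zsmul_left 3 m 0 0 (toFn f)
  rw [gbr_gbr, h, gbr, right_zero, left_zero, smul_zero, sub_zero]
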